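/- arXiv:2009.02530 — 2 statements merged into one kernel-verified Lean document; each statement's English description precedes it below -/
import Mathlib

section
/- For the nonscalar grading of J₂ the following five graded identities hold, for all y₁,y₂,y₃ ∈ J₀, z₁,z₂ ∈ J₁ and x, x₁, x₂, x₃ ∈ J₂: (1) x₁∘(x₂∘x₃) = x₂∘(x₁∘x₃) whenever x₁ and x₂ both lie in J₀ or both lie in J₁; (2) (y₁∘y₂, z₁, z₂) = y₁∘(y₂,z₁,z₂) + y₂∘(y₁,z₁,z₂) − 2·z₁∘(z₂,y₁,y₂); (3) (y₁∘y₂, y₃, z₁) = y₁∘(y₂,y₃,z₁) + y₂∘(y₁,y₃,z₁); (4) (z₁∘z₂, x₁, x₂) = 0; (5) ((y₁,y₂,z₁), x, y₃) = ((y₁,y₃,z₁), x, y₂). -/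
open Matrix

/-- The Jordan product `x ∘ y = (xy + yx)/2` on `2×2` matrices. -/
noncomputable def jmul {K : Type*} [Field K] (x y : Matrix (Fin 2) (Fin 2) K) :
    Matrix (Fin 2) (Fin 2) K :=
  (2 : K)⁻¹ • (x * y + y * x)

/-- The associator `(x,y,z) = (x∘y)∘z − x∘(y∘z)`. -/
noncomputable def jassoc {K : Type*} [Field K] (x y z : Matrix (Fin 2) (Fin 2) K) :
    Matrix (Fin 2) (Fin 2) K :=
  jmul (jmul x y) z - jmul x (jmul y z)

/-- The matrix `a = e₁₁ − e₂₂`. -/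
def amat (K : Type*) [Field K] : Matrix (Fin 2) (Fin 2) K := !![1, 0; 0, -1]

/-- The matrix `b = e₁₂ + e₂₁`. -/
def bmat (K : Type*) [Field K] : Matrix (Fin 2) (Fin 2) K := !![0, 1; 1, 0]

/-- The even part `J₀ = span{I, a}` of the nonscalar grading. -/
def J0 (K : Type*) [Field K] : Submodule K (Matrix (Fin 2) (Fin 2) K) :=
  Submodule.span K {1, amat K}

/-- The odd part `J₁ = span{b}` of the nonscalar grading. -/
def J1 (K : Type*) [Field K] : Submodule K (Matrix (Fin 2) (Fin 2) K) :=
  Submodule.span K {bmat K}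

/-!
The products `1 ∘ 1 = a ∘ a = b ∘ b = 1` and `a ∘ b = 0` are all that matters: they make
`J₂ = K·1 ⊕ (K·a ⊕ K·b)` the Jordan algebra of a bilinear form for which `a` and `b` are
orthogonal. Since associators vanish on the unit, each associator of homogeneous elements only
sees the `a`-coordinates of its even arguments, and is a multiple of one of
`(a, a, b) = b`, `(a, b, b) = -a`, `(b, a, a) = -b`, which turns the identities into comparisons
of coefficients. Identity (1) holds for even `x₁`, `x₂` because left multiplication by `p·1 + q·a`
is affine in the single operator of left multiplication by `a`.
-/

section Bilinear

open Submodule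

variable {R A : Type*} [CommRing R] [AddCommGroup A] [Module R A]

/-- The associator `(x, y, z) = (xy)z − x(yz)` of a possibly nonassociative product, both given as
bundled multilinear maps so that linearity in each argument is available to `simp`. -/
def bilinAssociator (μ : A →ₗ[R] A →ₗ[R] A) : A →ₗ[R] A →ₗ[R] A →ₗ[R] A :=
  μ.compr₂ μ - (LinearMap.llcomp R A A A).compl₁₂ μ μ

variable {μ : A →ₗ[R] A →ₗ[R] A} {e a b : A} {α β : R}

theorem bilinAssociator_apply (x y z : A) :
    bilinAssociator μ x y z = μ (μ x y) z - μ x (μ y z) :=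
  rfl

theorem bilinAssociator_unit_left (he : ∀ x, μ e x = x) (x y : A) :
    bilinAssociator μ e x y = 0 := by
  rw [bilinAssociator_apply, he, he, sub_self]

theorem bilinAssociator_unit_middle (he : ∀ x, μ e x = x) (he' : ∀ x, μ x e = x) (x y : A) :
    bilinAssociator μ x e y = 0 := by
  rw [bilinAssociator_apply, he, he', sub_self]

theorem bilinAssociator_unit_right (he' : ∀ x, μ x e = x) (x y : A) :
    bilinAssociator μ x y e = 0 := by
  rw [bilinAssociator_apply, he', he', sub_self]

theorem bilin_left_comm_of_mem_span_unit_pair (he : ∀ x, μ e x = x) {x₁ x₂ : A}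
    (h₁ : x₁ ∈ span R {e, a}) (h₂ : x₂ ∈ span R {e, a}) (x₃ : A) :
    μ x₁ (μ x₂ x₃) = μ x₂ (μ x₁ x₃) := by
  obtain ⟨p₁, q₁, rfl⟩ := mem_span_pair.mp h₁
  obtain ⟨p₂, q₂, rfl⟩ := mem_span_pair.mp h₂
  simp only [map_add, map_smul, LinearMap.add_apply, LinearMap.smul_apply, he]
  module

theorem bilin_left_comm_of_mem_span_singleton {x₁ x₂ : A}
    (h₁ : x₁ ∈ span R {b}) (h₂ : x₂ ∈ span R {b}) (x₃ : A) :
    μ x₁ (μ x₂ x₃) = μ x₂ (μ x₁ x₃) := by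
  obtain ⟨c₁, rfl⟩ := mem_span_singleton.mp h₁
  obtain ⟨c₂, rfl⟩ := mem_span_singleton.mp h₂
  simp only [map_smul, LinearMap.smul_apply, smul_comm c₁ c₂]

/-- The multiplication table of the Jordan algebra of a bilinear form `f` in terms of its unit `e`
and of orthogonal vectors `a`, `b`, where `α = f(a, a)` and `β = f(b, b)`. The elements `e`, `a`,
`b` may be linearly dependent and need not span `A`. -/
structure IsOrthogonalFrame (μ : A →ₗ[R] A →ₗ[R] A) (e a b : A) (α β : R) : Prop where
  unit_mul : ∀ x, μ e x = x
  mul_unit : ∀ x, μ x e = x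
  a_mul_a : μ a a = α • e
  b_mul_b : μ b b = β • e
  a_mul_b : μ a b = 0
  b_mul_a : μ b a = 0

namespace IsOrthogonalFrame

variable (h : IsOrthogonalFrame μ e a b α β)
include h

theorem even_mul_even (p₁ q₁ p₂ q₂ : R) :
    μ (p₁ • e + q₁ • a) (p₂ • e + q₂ • a) =
      (p₁ * p₂ + q₁ * q₂ * α) • e + (p₁ * q₂ + q₁ * p₂) • a := by
  simp only [map_add, map_smul, LinearMap.add_apply, LinearMap.smul_apply, h.unit_mul, h.mul_unit,
    h.a_mul_a]
  module

theorem even_mul_a (p q : R) : μ (p • e + q • a) a = (q * α) • e + p • a := by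
  simpa using h.even_mul_even p q 0 1

theorem even_mul_b (p q : R) : μ (p • e + q • a) b = p • b := by
  simp only [map_add, map_smul, LinearMap.add_apply, LinearMap.smul_apply, h.unit_mul, h.a_mul_b,
    smul_zero, add_zero]

theorem odd_mul_odd (c₁ c₂ : R) : μ (c₁ • b) (c₂ • b) = (c₁ * c₂ * β) • e := by
  simp only [map_smul, LinearMap.smul_apply, h.b_mul_b]
  module

theorem associator_a_a_b : bilinAssociator μ a a b = α • b := by
  simp only [bilinAssociator_apply, h.a_mul_a, h.a_mul_b, map_smul, LinearMap.smul_apply,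
    h.unit_mul, map_zero, sub_zero]

theorem associator_a_b_b : bilinAssociator μ a b b = -(β • a) := by
  simp only [bilinAssociator_apply, h.a_mul_b, h.b_mul_b, map_smul, h.mul_unit, map_zero,
    LinearMap.zero_apply, zero_sub]

theorem associator_b_a_a : bilinAssociator μ b a a = -(α • b) := by
  simp only [bilinAssociator_apply, h.b_mul_a, h.a_mul_a, map_smul, h.mul_unit, map_zero,
    LinearMap.zero_apply, zero_sub]

theorem associator_even_left (p q : R) (x y : A) :
    bilinAssociator μ (p • e + q • a) x y = q • bilinAssociator μ a x y := by
  simp only [map_add, map_smul, LinearMap.add_apply, LinearMap.smul_apply,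
    bilinAssociator_unit_left h.unit_mul, smul_zero, zero_add]

theorem associator_even_middle (p q : R) (x y : A) :
    bilinAssociator μ x (p • e + q • a) y = q • bilinAssociator μ x a y := by
  simp only [map_add, map_smul, LinearMap.add_apply, LinearMap.smul_apply,
    bilinAssociator_unit_middle h.unit_mul h.mul_unit, smul_zero, zero_add]

theorem associator_even_right (p q : R) (x y : A) :
    bilinAssociator μ x y (p • e + q • a) = q • bilinAssociator μ x y a := by
  simp only [map_add, map_smul, bilinAssociator_unit_right h.mul_unit, smul_zero, zero_add]

theorem associator_even_odd_odd (p q c₁ c₂ : R) :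
    bilinAssociator μ (p • e + q • a) (c₁ • b) (c₂ • b) = -(q * c₁ * c₂ * β) • a := by
  simp only [h.associator_even_left, map_smul, LinearMap.smul_apply, h.associator_a_b_b]
  module

theorem associator_even_even_odd (p₁ q₁ p₂ q₂ c : R) :
    bilinAssociator μ (p₁ • e + q₁ • a) (p₂ • e + q₂ • a) (c • b) = (q₁ * q₂ * c * α) • b := by
  simp only [h.associator_even_left, h.associator_even_middle, map_smul, h.associator_a_a_b]
  module

theorem associator_odd_even_even (c p₁ q₁ p₂ q₂ : R) :
    bilinAssociator μ (c • b) (p₁ • e + q₁ • a) (p₂ • e + q₂ • a) = -(c * q₁ * q₂ * α) • b := by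
  simp only [h.associator_even_middle, h.associator_even_right, map_smul, LinearMap.smul_apply,
    h.associator_b_a_a]
  module

variable {y₁ y₂ y₃ z₁ z₂ : A}

theorem associator_mul_odd_odd (hy₁ : y₁ ∈ span R {e, a}) (hy₂ : y₂ ∈ span R {e, a})
    (hz₁ : z₁ ∈ span R {b}) (hz₂ : z₂ ∈ span R {b}) :
    bilinAssociator μ (μ y₁ y₂) z₁ z₂ =
      μ y₁ (bilinAssociator μ y₂ z₁ z₂) + μ y₂ (bilinAssociator μ y₁ z₁ z₂)
        - 2 • μ z₁ (bilinAssociator μ z₂ y₁ y₂) := by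
  obtain ⟨p₁, q₁, rfl⟩ := mem_span_pair.mp hy₁
  obtain ⟨p₂, q₂, rfl⟩ := mem_span_pair.mp hy₂
  obtain ⟨c₁, rfl⟩ := mem_span_singleton.mp hz₁
  obtain ⟨c₂, rfl⟩ := mem_span_singleton.mp hz₂
  rw [h.even_mul_even]
  simp only [h.associator_even_odd_odd, h.associator_odd_even_even, h.odd_mul_odd]
  simp only [map_smul, h.even_mul_a]
  module

theorem associator_mul_even_odd (hy₁ : y₁ ∈ span R {e, a}) (hy₂ : y₂ ∈ span R {e, a})
    (hy₃ : y₃ ∈ span R {e, a}) (hz₁ : z₁ ∈ span R {b}) :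
    bilinAssociator μ (μ y₁ y₂) y₃ z₁ =
      μ y₁ (bilinAssociator μ y₂ y₃ z₁) + μ y₂ (bilinAssociator μ y₁ y₃ z₁) := by
  obtain ⟨p₁, q₁, rfl⟩ := mem_span_pair.mp hy₁
  obtain ⟨p₂, q₂, rfl⟩ := mem_span_pair.mp hy₂
  obtain ⟨p₃, q₃, rfl⟩ := mem_span_pair.mp hy₃
  obtain ⟨c, rfl⟩ := mem_span_singleton.mp hz₁
  rw [h.even_mul_even]
  simp only [h.associator_even_even_odd]
  simp only [map_smul, h.even_mul_b]
  module

theorem associator_odd_mul_odd_eq_zero (hz₁ : z₁ ∈ span R {b}) (hz₂ : z₂ ∈ span R {b})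
    (x₁ x₂ : A) : bilinAssociator μ (μ z₁ z₂) x₁ x₂ = 0 := by
  obtain ⟨c₁, rfl⟩ := mem_span_singleton.mp hz₁
  obtain ⟨c₂, rfl⟩ := mem_span_singleton.mp hz₂
  rw [h.odd_mul_odd]
  simp only [map_smul, LinearMap.smul_apply, bilinAssociator_unit_left h.unit_mul, smul_zero]

theorem associator_associator_right_comm (hy₁ : y₁ ∈ span R {e, a}) (hy₂ : y₂ ∈ span R {e, a})
    (hy₃ : y₃ ∈ span R {e, a}) (hz₁ : z₁ ∈ span R {b}) (x : A) :
    bilinAssociator μ (bilinAssociator μ y₁ y₂ z₁) x y₃ =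
      bilinAssociator μ (bilinAssociator μ y₁ y₃ z₁) x y₂ := by
  obtain ⟨p₁, q₁, rfl⟩ := mem_span_pair.mp hy₁
  obtain ⟨p₂, q₂, rfl⟩ := mem_span_pair.mp hy₂
  obtain ⟨p₃, q₃, rfl⟩ := mem_span_pair.mp hy₃
  obtain ⟨c, rfl⟩ := mem_span_singleton.mp hz₁
  simp only [h.associator_even_even_odd, h.associator_even_right, map_smul, LinearMap.smul_apply]
  module

end IsOrthogonalFrame

theorem stmt8_general (h : IsOrthogonalFrame μ e a b α β) :
    (∀ x₁ x₂ x₃ : A,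
      ((x₁ ∈ span R {e, a} ∧ x₂ ∈ span R {e, a}) ∨ (x₁ ∈ span R {b} ∧ x₂ ∈ span R {b})) →
      μ x₁ (μ x₂ x₃) = μ x₂ (μ x₁ x₃)) ∧
    (∀ y₁ ∈ span R {e, a}, ∀ y₂ ∈ span R {e, a}, ∀ z₁ ∈ span R {b}, ∀ z₂ ∈ span R {b},
      bilinAssociator μ (μ y₁ y₂) z₁ z₂ =
        μ y₁ (bilinAssociator μ y₂ z₁ z₂) + μ y₂ (bilinAssociator μ y₁ z₁ z₂)
          - 2 • μ z₁ (bilinAssociator μ z₂ y₁ y₂)) ∧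
    (∀ y₁ ∈ span R {e, a}, ∀ y₂ ∈ span R {e, a}, ∀ y₃ ∈ span R {e, a}, ∀ z₁ ∈ span R {b},
      bilinAssociator μ (μ y₁ y₂) y₃ z₁ =
        μ y₁ (bilinAssociator μ y₂ y₃ z₁) + μ y₂ (bilinAssociator μ y₁ y₃ z₁)) ∧
    (∀ z₁ ∈ span R {b}, ∀ z₂ ∈ span R {b}, ∀ x₁ x₂ : A,
      bilinAssociator μ (μ z₁ z₂) x₁ x₂ = 0) ∧
    (∀ y₁ ∈ span R {e, a}, ∀ y₂ ∈ span R {e, a}, ∀ y₃ ∈ span R {e, a}, ∀ z₁ ∈ span R {b},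
      ∀ x : A, bilinAssociator μ (bilinAssociator μ y₁ y₂ z₁) x y₃ =
        bilinAssociator μ (bilinAssociator μ y₁ y₃ z₁) x y₂) := by
  refine ⟨?_, fun _ hy₁ _ hy₂ _ hz₁ _ hz₂ => h.associator_mul_odd_odd hy₁ hy₂ hz₁ hz₂,
    fun _ hy₁ _ hy₂ _ hy₃ _ hz₁ => h.associator_mul_even_odd hy₁ hy₂ hy₃ hz₁,
    fun _ hz₁ _ hz₂ => h.associator_odd_mul_odd_eq_zero hz₁ hz₂,
    fun _ hy₁ _ hy₂ _ hy₃ _ hz₁ => h.associator_associator_right_comm hy₁ hy₂ hy₃ hz₁⟩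
  rintro x₁ x₂ x₃ (⟨h₁, h₂⟩ | ⟨h₁, h₂⟩)
  · exact bilin_left_comm_of_mem_span_unit_pair h.unit_mul h₁ h₂ x₃
  · exact bilin_left_comm_of_mem_span_singleton h₁ h₂ x₃

end Bilinear

section JordanProduct

variable {K : Type*} [Field K]

/-- The Jordan product `jmul` of `2×2` matrices as a bilinear map. -/
noncomputable def jmulBilin (K : Type*) [Field K] :
    Matrix (Fin 2) (Fin 2) K →ₗ[K] Matrix (Fin 2) (Fin 2) K →ₗ[K] Matrix (Fin 2) (Fin 2) K :=
  (2 : K)⁻¹ • (LinearMap.mul K _ + (LinearMap.mul K _).flip)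

theorem jmulBilin_apply (x y : Matrix (Fin 2) (Fin 2) K) : jmulBilin K x y = jmul x y :=
  rfl

theorem bilinAssociator_jmulBilin (x y z : Matrix (Fin 2) (Fin 2) K) :
    bilinAssociator (jmulBilin K) x y z = jassoc x y z :=
  rfl

theorem jmul_comm (x y : Matrix (Fin 2) (Fin 2) K) : jmul x y = jmul y x := by
  rw [jmul, jmul, add_comm]

theorem jmul_eq_mul_of_commute (h2 : (2 : K) ≠ 0) {x y : Matrix (Fin 2) (Fin 2) K}
    (h : Commute x y) : jmul x y = x * y := by
  rw [jmul, ← h.eq, ← two_smul K, inv_smul_smul₀ h2]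

theorem amat_mul_amat : amat K * amat K = 1 := by
  simp [amat, one_fin_two]

theorem bmat_mul_bmat : bmat K * bmat K = 1 := by
  simp [bmat, one_fin_two]

theorem jmul_amat_bmat : jmul (amat K) (bmat K) = 0 := by
  simp [jmul, amat, bmat, ← Matrix.ext_iff, Fin.forall_fin_two]

theorem isOrthogonalFrame_amat_bmat (h2 : (2 : K) ≠ 0) :
    IsOrthogonalFrame (jmulBilin K) 1 (amat K) (bmat K) (1 : K) 1 where
  unit_mul x := (jmul_eq_mul_of_commute h2 (Commute.one_left x)).trans (one_mul x)
  mul_unit x := (jmul_eq_mul_of_commute h2 (Commute.one_right x)).trans (mul_one x)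
  a_mul_a := by
    rw [one_smul, ← amat_mul_amat]
    exact jmul_eq_mul_of_commute h2 (Commute.refl _)
  b_mul_b := by
    rw [one_smul, ← bmat_mul_bmat]
    exact jmul_eq_mul_of_commute h2 (Commute.refl _)
  a_mul_b := jmul_amat_bmat
  b_mul_a := (jmul_comm _ _).trans jmul_amat_bmat

end JordanProduct

/-- The five defining graded identities (1)–(5) of the nonscalar grading hold in `J₂`. -/
theorem stmt8 {K : Type*} [Field K] (h2 : (2 : K) ≠ 0) :
    (∀ x₁ x₂ x₃ : Matrix (Fin 2) (Fin 2) K, x₃ᵀ = x₃ →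
      ((x₁ ∈ J0 K ∧ x₂ ∈ J0 K) ∨ (x₁ ∈ J1 K ∧ x₂ ∈ J1 K)) →
      jmul x₁ (jmul x₂ x₃) = jmul x₂ (jmul x₁ x₃)) ∧
    (∀ y₁ ∈ J0 K, ∀ y₂ ∈ J0 K, ∀ z₁ ∈ J1 K, ∀ z₂ ∈ J1 K,
      jassoc (jmul y₁ y₂) z₁ z₂ =
        jmul y₁ (jassoc y₂ z₁ z₂) + jmul y₂ (jassoc y₁ z₁ z₂)
          - 2 • jmul z₁ (jassoc z₂ y₁ y₂)) ∧
    (∀ y₁ ∈ J0 K, ∀ y₂ ∈ J0 K, ∀ y₃ ∈ J0 K, ∀ z₁ ∈ J1 K,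
      jassoc (jmul y₁ y₂) y₃ z₁ =
        jmul y₁ (jassoc y₂ y₃ z₁) + jmul y₂ (jassoc y₁ y₃ z₁)) ∧
    (∀ z₁ ∈ J1 K, ∀ z₂ ∈ J1 K, ∀ x₁ x₂ : Matrix (Fin 2) (Fin 2) K,
      x₁ᵀ = x₁ → x₂ᵀ = x₂ → jassoc (jmul z₁ z₂) x₁ x₂ = 0) ∧
    (∀ y₁ ∈ J0 K, ∀ y₂ ∈ J0 K, ∀ y₃ ∈ J0 K, ∀ z₁ ∈ J1 K,
      ∀ x : Matrix (Fin 2) (Fin 2) K, xᵀ = x →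
      jassoc (jassoc y₁ y₂ z₁) x y₃ = jassoc (jassoc y₁ y₃ z₁) x y₂) := by
  simp only [← jmulBilin_apply, ← bilinAssociator_jmulBilin]
  have ⟨h₁, h₂, h₃, h₄, h₅⟩ := stmt8_general (isOrthogonalFrame_amat_bmat h2)
  exact ⟨fun _ _ _ _ => h₁ _ _ _, h₂, h₃, fun _ hz₁ _ hz₂ _ _ _ _ => h₄ _ hz₁ _ hz₂ _ _,
    fun _ hy₁ _ hy₂ _ hy₃ _ hz₁ _ _ => h₅ _ hy₁ _ hy₂ _ hy₃ _ hz₁ _⟩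
end

section
/- For the nonscalar grading of J₂: for every k ≥ 1, every z ∈ J₁, every y₁,…,y_{2k} ∈ J₀, and every permutation σ of {1,…,2k}, the left-normed associator satisfies (z, y₁, …, y_{2k}) = (z, y_{σ(1)}, …, y_{σ(2k)}). -/
open Matrix

/-- The left-normed associator `(w, u₁, …, u_{2j}) = ((w, u₁, …, u_{2j−2}), u_{2j−1}, u_{2j})`,
consuming the list of arguments two at a time. -/
noncomputable def leftNormed {K : Type*} [Field K] (w : Matrix (Fin 2) (Fin 2) K) :
    List (Matrix (Fin 2) (Fin 2) K) → Matrix (Fin 2) (Fin 2) K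
  | u₁ :: u₂ :: rest => leftNormed (jassoc w u₁ u₂) rest
  | _ => w

/-! In an associative ring with `1/2` the Jordan associator is a double commutator,
`(x, y, z) = [y, [x, z]]/4`. If `u` and `v` commute, the Jacobi identity turns this into
`(w, u, v) = -[[w, u], v]/4`. Hence, for pairwise commuting `y₁, …, y_{2k}`, the left-normed
associator `(z, y₁, …, y_{2k})` is `(-1/4)^k` times the left-normed commutator
`[…[[z, y₁], y₂], …, y_{2k}]`, in which the operators `[·, yᵢ]` commute with one another.
The elements of the even part `J₀` of the nonscalar grading do commute. -/

/-- The left-normed associator `(w, u₁, …, u_{2j})` in an arbitrary nonassociative ring, of which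
`leftNormed` is the case of symmetrized `2×2` matrices. As there, the last entry of a list of odd
length is ignored. -/
def leftNormedAssociator {A : Type*} [NonUnitalNonAssocRing A] (w : A) : List A → A
  | u :: v :: rest => leftNormedAssociator (associator w u v) rest
  | _ => w

section LieRing

variable {L : Type*} [LieRing L]

theorem lie_lie_right_comm {u v : L} (h : ⁅u, v⁆ = 0) (w : L) : ⁅⁅w, u⁆, v⁆ = ⁅⁅w, v⁆, u⁆ := by
  rw [lie_lie w u v, h, lie_zero, zero_sub, lie_skew]

theorem foldl_lie_perm {l l' : List L} (hperm : l.Perm l') (hl : ∀ u ∈ l, ∀ v ∈ l, ⁅u, v⁆ = 0)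
    (w : L) : l.foldl (⁅·, ·⁆) w = l'.foldl (⁅·, ·⁆) w :=
  hperm.foldl_eq' (fun u hu v hv ↦ lie_lie_right_comm (hl u hu v hv)) w

end LieRing

section SymmetrizedRing

open SymAlg

attribute [local instance] LieRing.ofAssociativeRing

variable {R : Type*} [Ring R]

theorem foldl_lie_mul_left {c : R} (hc : ∀ x, Commute c x) (w : R) (l : List R) :
    l.foldl (⁅·, ·⁆) (c * w) = c * l.foldl (⁅·, ·⁆) w :=
  List.foldl_hom (c * ·) fun w u ↦ by
    simp only [Ring.lie_def, mul_sub, mul_assoc, (hc u).left_comm]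

variable [Invertible (2 : R)]

theorem commute_invOf_two (x : R) : Commute ⅟2 x :=
  (Commute.ofNat_left 2 x).invOf_left

theorem associator_sym (x y z : R) :
    associator (sym x) (sym y) (sym z) = sym (⅟2 * ⅟2 * ⁅y, ⁅x, z⁆⁆) := by
  have hx (t : R) : x * (⅟2 * t) = ⅟2 * (x * t) := ((commute_invOf_two x).left_comm t).symm
  have hz (t : R) : z * (⅟2 * t) = ⅟2 * (z * t) := ((commute_invOf_two z).left_comm t).symm
  simp only [associator_apply, sym_mul_sym, ← sym_sub, sym_inj, Ring.lie_def, mul_assoc, hx, hz,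
    ← mul_add, ← mul_sub]
  congr 2
  noncomm_ring

theorem associator_sym_of_commute {u v : R} (h : Commute u v) (w : R) :
    associator (sym w) (sym u) (sym v) = sym (-(⅟2 * ⅟2) * ⁅⁅w, u⁆, v⁆) := by
  rw [associator_sym, lie_lie_right_comm h.lie_eq, ← lie_skew, mul_neg, neg_mul]

theorem leftNormedAssociator_sym {n : ℕ} (w : R) {l : List R} (hlen : l.length = 2 * n)
    (hl : ∀ u ∈ l, ∀ v ∈ l, Commute u v) :
    leftNormedAssociator (sym w) (l.map sym) =
      sym ((-(⅟2 * ⅟2)) ^ n * l.foldl (⁅·, ·⁆) w) := by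
  have hcentral (x : R) : Commute (-(⅟2 * ⅟2)) x :=
    ((commute_invOf_two x).mul_left (commute_invOf_two x)).neg_left
  induction n generalizing w l with
  | zero =>
    obtain rfl : l = [] := List.length_eq_zero_iff.1 hlen
    simp [leftNormedAssociator]
  | succ n ih =>
    match l, hlen with
    | u :: v :: rest, hlen =>
      have huv : Commute u v := hl u (by simp) v (by simp)
      have hrest : ∀ x ∈ rest, ∀ y ∈ rest, Commute x y := fun x hx y hy ↦
        hl x (by simp [hx]) y (by simp [hy])
      have hlen' : rest.length = 2 * n := by grind
      calc leftNormedAssociator (sym w) ((u :: v :: rest).map sym)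
        _ = leftNormedAssociator (sym (-(⅟2 * ⅟2) * ⁅⁅w, u⁆, v⁆)) (rest.map sym) := by
          rw [List.map_cons, List.map_cons, leftNormedAssociator, associator_sym_of_commute huv]
        _ = sym ((-(⅟2 * ⅟2)) ^ (n + 1) * rest.foldl (⁅·, ·⁆) ⁅⁅w, u⁆, v⁆) := by
          rw [ih _ hlen' hrest, foldl_lie_mul_left hcentral, ← mul_assoc, ← pow_succ]

theorem leftNormedAssociator_sym_perm {l l' : List R} (hperm : l.Perm l') (heven : Even l.length)
    (hl : ∀ u ∈ l, ∀ v ∈ l, Commute u v) (w : R) :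
    leftNormedAssociator (sym w) (l.map sym) = leftNormedAssociator (sym w) (l'.map sym) := by
  obtain ⟨n, hlen⟩ := heven.exists_two_nsmul
  have hl' : ∀ u ∈ l', ∀ v ∈ l', Commute u v := fun u hu v hv ↦
    hl u (hperm.mem_iff.2 hu) v (hperm.mem_iff.2 hv)
  rw [leftNormedAssociator_sym w hlen hl, leftNormedAssociator_sym w (hperm.length_eq ▸ hlen) hl',
    foldl_lie_perm hperm fun u hu v hv ↦ (hl u hu v hv).lie_eq]

theorem stmt10_general (k : ℕ) (z : R) (y : Fin (2 * k) → R) (hy : ∀ i j, Commute (y i) (y j))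
    (σ : Equiv.Perm (Fin (2 * k))) :
    leftNormedAssociator (sym z) (List.ofFn (sym ∘ y)) =
      leftNormedAssociator (sym z) (List.ofFn (sym ∘ y ∘ σ)) := by
  simpa only [List.map_ofFn] using leftNormedAssociator_sym_perm (σ.ofFn_comp_perm y).symm
    (by simp) (by simpa only [List.forall_mem_ofFn_iff] using hy) z

end SymmetrizedRing

theorem invOf_two_mul_eq_inv_two_smul (K : Type*) {A : Type*} [Field K] [Ring A] [Nontrivial A]
    [Algebra K A] [Invertible (2 : A)] (x : A) : ⅟2 * x = (2 : K)⁻¹ • x := by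
  have h2 : (2 : K) ≠ 0 :=
    (map_ne_zero (algebraMap K A)).1 (by simpa only [map_ofNat] using Invertible.ne_zero (2 : A))
  rw [invOf_mul_eq_iff_eq_mul_left, mul_smul_comm, two_mul, ← two_smul K x, inv_smul_smul₀ h2]

section TwoByTwo

open SymAlg

variable {K : Type*} [Field K]

theorem commute_of_mem_J0 {u v : Matrix (Fin 2) (Fin 2) K} (hu : u ∈ J0 K) (hv : v ∈ J0 K) :
    Commute u v := by
  obtain ⟨p, q, rfl⟩ := Submodule.mem_span_pair.1 hu
  obtain ⟨r, s, rfl⟩ := Submodule.mem_span_pair.1 hv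
  have hscalar (A : Matrix (Fin 2) (Fin 2) K) (t : K) : Commute (t • 1) A :=
    (Commute.one_left A).smul_left t
  have ha : Commute (q • amat K) (s • amat K) :=
    ((Commute.refl (amat K)).smul_left q).smul_right s
  exact (hscalar _ p).add_left ((hscalar _ r).symm.add_right ha)

variable [Invertible (2 : Matrix (Fin 2) (Fin 2) K)]

theorem sym_jmul (x y : Matrix (Fin 2) (Fin 2) K) : sym (jmul x y) = sym x * sym y := by
  rw [sym_mul_sym, invOf_two_mul_eq_inv_two_smul K, jmul]

theorem sym_jassoc (x y z : Matrix (Fin 2) (Fin 2) K) :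
    sym (jassoc x y z) = associator (sym x) (sym y) (sym z) := by
  simp only [jassoc, associator_apply, sym_sub, sym_jmul]

theorem sym_leftNormed (w : Matrix (Fin 2) (Fin 2) K) (l : List (Matrix (Fin 2) (Fin 2) K)) :
    sym (leftNormed w l) = leftNormedAssociator (sym w) (l.map sym) := by
  fun_induction leftNormed w l with
  | case1 w u v rest ih => rw [ih, sym_jassoc, List.map_cons, List.map_cons, leftNormedAssociator]
  | case2 l w hshort =>
    match l, hshort with
    | [], _ => rfl
    | [_], _ => rfl
    | u :: v :: rest, hshort => exact (hshort u v rest rfl).elim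

end TwoByTwo

/-- For the nonscalar grading, the left-normed associator `(z, y₁, …, y_{2k})` is symmetric
in the even variables: `(z, y₁, …, y_{2k}) = (z, y_{σ(1)}, …, y_{σ(2k)})`. -/
theorem stmt10 {K : Type*} [Field K] (h2 : (2 : K) ≠ 0) (k : ℕ) (hk : 1 ≤ k)
    (z : Matrix (Fin 2) (Fin 2) K) (hz : z ∈ J1 K)
    (y : Fin (2 * k) → Matrix (Fin 2) (Fin 2) K) (hy : ∀ i, y i ∈ J0 K)
    (σ : Equiv.Perm (Fin (2 * k))) :
    leftNormed z (List.ofFn y) = leftNormed z (List.ofFn (y ∘ σ)) := by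
  let _ : Invertible (2 : Matrix (Fin 2) (Fin 2) K) :=
    ((invertibleOfNonzero h2).map (algebraMap K _)).copy 2 (map_ofNat _ 2).symm
  exact SymAlg.sym_injective <| by
    simpa only [sym_leftNormed, List.map_ofFn] using
      stmt10_general k z y (fun i j ↦ commute_of_mem_J0 (hy i) (hy j)) σ
end
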